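/- For every integer k ≥ 1 and every real λ > 0, the fifth factorial moment of the Poisson distribution of order k is M_{(5)}(k,λ) = κ₁⁵ λ⁵ + 20 κ₁³ κ₂ λ⁴ + (60 κ₁ κ₂² + 60 κ₁² κ₃) λ³ + (120 κ₁ κ₄ + 120 κ₂ κ₃) λ² + 120 κ₅ λ, where κ_j = C(k+1, j+1). -/

import Mathlib

/-!
The generating function `∑ₘ Pₘ tᵐ` is entire and equals `exp (q t)` with
`q t = λ ∑_{j=1}^k (tʲ - 1)`, so the factorial moments are its derivatives at `t = 1`. By the
hockey-stick identity the `i`-th derivative of `q` at `1` is `λ i! κ_i`, so applying Leibniz' rule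
to `(exp q)' = q' exp q` expresses each factorial moment through the lower ones.
-/

open scoped BigOperators

/-- The finite set of `k`-tuples `(n₁, …, n_k)` of nonnegative integers
(encoded as functions `Fin k → Fin (m+1)`) satisfying `n₁ + 2 n₂ + ⋯ + k n_k = m`. -/
def orderkTuples (k m : ℕ) : Finset (Fin k → Fin (m + 1)) :=
  Finset.univ.filter (fun f => ∑ j : Fin k, (j.1 + 1) * (f j).1 = m)

/-- The probability mass function of the Poisson distribution of order `k`. -/
noncomputable def poissonOrderK (k : ℕ) (lam : ℝ) (m : ℕ) : ℝ :=
  Real.exp (-(k * lam)) *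
    ∑ f ∈ orderkTuples k m, ∏ j : Fin k, lam ^ (f j).1 / (f j).1.factorial

/-- `κ_j = C(k+1, j+1)`, as a real number (it vanishes for `j > k`). -/
noncomputable def kappa (k j : ℕ) : ℝ := ((k + 1).choose (j + 1) : ℝ)

section PowerSeries

open FormalMultilinearSeries

variable {𝕜 : Type*} [NontriviallyNormedField 𝕜] {a : ℕ → 𝕜} {G : 𝕜 → 𝕜}

theorem hasFPowerSeriesOnBall_ofScalars_top (h : ∀ t, HasSum (fun m ↦ a m * t ^ m) (G t)) :
    HasFPowerSeriesOnBall G (ofScalars 𝕜 a) 0 ⊤ where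
  r_le := by
    refine (ENNReal.eq_top_of_forall_nnreal_le fun r ↦ ?_).ge
    obtain ⟨t, ht⟩ := NormedField.exists_lt_norm 𝕜 r
    have terms_tendsto : Filter.Tendsto (fun m ↦ ‖ofScalars 𝕜 a m‖ * ‖t‖₊ ^ m) Filter.atTop
        (nhds 0) := by
      simpa using (h t).summable.tendsto_atTop_zero.norm
    exact le_trans (mod_cast ht.le) (le_radius_of_tendsto _ terms_tendsto)
  r_pos := ENNReal.zero_lt_top
  hasSum {t} _ := by simpa [ofScalars_apply_eq, mul_comm] using h t

variable [CompleteSpace 𝕜]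

theorem hasSum_deriv_of_forall_hasSum (h : ∀ t, HasSum (fun m ↦ a m * t ^ m) (G t)) (t : 𝕜) :
    HasSum (fun m : ℕ ↦ (m + 1) * a (m + 1) * t ^ m) (deriv G t) := by
  have fderiv_hasSum := (hasFPowerSeriesOnBall_ofScalars_top h).fderiv.hasSum (y := t) (by simp)
  simpa [apply_eq_pow_smul_coeff, derivSeries_coeff_one, mul_comm, mul_left_comm]
    using fderiv_hasSum.mapL (ContinuousLinearMap.apply 𝕜 𝕜 1)

theorem hasSum_iteratedDeriv_of_forall_hasSum (h : ∀ t, HasSum (fun m ↦ a m * t ^ m) (G t))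
    (n : ℕ) (t : 𝕜) :
    HasSum (fun m ↦ (m + n).descFactorial n * a (m + n) * t ^ m) (iteratedDeriv n G t) := by
  induction n generalizing t with
  | zero => simpa using h t
  | succ n ih =>
    rw [iteratedDeriv_succ]
    refine (hasSum_deriv_of_forall_hasSum ih t).congr_fun fun m ↦ ?_
    rw [← add_assoc, add_right_comm, Nat.descFactorial_succ, Nat.add_sub_cancel_right]
    push_cast
    ring

theorem hasSum_descFactorial_mul_of_forall_hasSum
    (h : ∀ t, HasSum (fun m ↦ a m * t ^ m) (G t)) (n : ℕ) :
    HasSum (fun m ↦ m.descFactorial n * a m) (iteratedDeriv n G 1) := by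
  have shifted := hasSum_iteratedDeriv_of_forall_hasSum h n 1
  simp only [one_pow, mul_one] at shifted
  have head_eq_zero : ∑ m ∈ Finset.range n, (m.descFactorial n : 𝕜) * a m = 0 :=
    Finset.sum_eq_zero fun m hm ↦ by
      simp [Nat.descFactorial_eq_zero_iff_lt.2 (Finset.mem_range.1 hm)]
  rw [hasSum_nat_add_iff (f := fun m ↦ (m.descFactorial n : 𝕜) * a m) n, head_eq_zero,
    add_zero] at shifted
  exact shifted

end PowerSeries

theorem iteratedDeriv_succ_exp {q : ℝ → ℝ} {n : ℕ} (hq : ContDiff ℝ (n + 1) q) (t : ℝ) :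
    iteratedDeriv (n + 1) (fun s ↦ Real.exp (q s)) t =
      ∑ i ∈ Finset.range (n + 1), n.choose i * iteratedDeriv (i + 1) q t *
        iteratedDeriv (n - i) (fun s ↦ Real.exp (q s)) t := by
  have deriv_exp_comp : deriv (fun s ↦ Real.exp (q s)) = deriv q * fun s ↦ Real.exp (q s) := by
    ext s
    rw [deriv_exp (hq.differentiable (by simp) s), mul_comm, Pi.mul_apply]
  have contDiff_deriv : ContDiff ℝ n (deriv q) := (contDiff_succ_iff_deriv.1 hq).2.2
  rw [iteratedDeriv_succ', deriv_exp_comp,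
    iteratedDeriv_mul contDiff_deriv.contDiffAt (hq.of_succ.exp).contDiffAt]
  simp only [iteratedDeriv_succ']

theorem hasSum_pi_prod {𝕜 : Type*} [RCLike 𝕜] {k : ℕ} {β : Fin k → Type*} {f : ∀ i, β i → 𝕜}
    {s : Fin k → 𝕜} (hf : ∀ i, HasSum (f i) (s i)) :
    HasSum (fun x : ∀ i, β i ↦ ∏ i, f i (x i)) (∏ i, s i) := by
  induction k with
  | zero => simp
  | succ k ih =>
    have tail := ih fun i ↦ hf i.succ
    have summable_head_mul_tail :=
      summable_mul_of_summable_norm (hf 0).summable.norm tail.summable.norm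
    have head_mul_tail := (hf 0).mul tail summable_head_mul_tail
    rw [Fin.prod_univ_succ]
    refine (Fin.consEquiv β).hasSum_iff.1 (head_mul_tail.congr_fun fun x ↦ ?_)
    simp [Fin.consEquiv, Fin.prod_univ_succ]

theorem sum_choose_succ_eq_choose (k i : ℕ) :
    ∑ j : Fin k, (j.1 + 1).choose (i + 1) = (k + 1).choose (i + 2) := by
  induction k with
  | zero => simp [Nat.choose_eq_zero_of_lt]
  | succ k ih =>
    rw [Fin.sum_univ_castSucc, Nat.choose_succ_succ (k + 1), add_comm]
    simp [ih]

section Tuples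

variable {k : ℕ}

/-- The weight `n₁ + 2 n₂ + ⋯ + k n_k` of a `k`-tuple, by which the defining sum of the Poisson
distribution of order `k` is graded. The entry at `j : Fin k` is `n_{j+1}`. -/
def tupleWeight (n : Fin k → ℕ) : ℕ := ∑ j : Fin k, (j.1 + 1) * n j

theorem le_tupleWeight (n : Fin k → ℕ) (j : Fin k) : n j ≤ tupleWeight n :=
  (Nat.le_mul_of_pos_left _ j.1.succ_pos).trans
    (Finset.single_le_sum (f := fun j : Fin k ↦ (j.1 + 1) * n j) (fun _ _ ↦ Nat.zero_le _)
      (Finset.mem_univ j))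

theorem mem_orderkTuples {m : ℕ} {f : Fin k → Fin (m + 1)} :
    f ∈ orderkTuples k m ↔ tupleWeight (fun j ↦ (f j).1) = m := by
  simp [orderkTuples, tupleWeight]

/-- The tuples of natural numbers of weight `m` are exactly those enumerated by `orderkTuples`,
whose entries are a priori bounded by `m`. -/
def weightFiberEquiv (k m : ℕ) :
    {n : Fin k → ℕ // tupleWeight n = m} ≃ orderkTuples k m where
  toFun n := ⟨fun j ↦ ⟨n.1 j, Nat.lt_succ_of_le ((le_tupleWeight n.1 j).trans_eq n.2)⟩,
    mem_orderkTuples.2 n.2⟩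
  invFun f := ⟨fun j ↦ (f.1 j).1, mem_orderkTuples.1 f.2⟩
  left_inv _ := rfl
  right_inv _ := rfl

theorem hasSum_sum_orderkTuples {M : Type*} [AddCommMonoid M] [TopologicalSpace M]
    [ContinuousAdd M] [RegularSpace M] {g : (Fin k → ℕ) → M} {s : M} (hg : HasSum g s) :
    HasSum (fun m ↦ ∑ f ∈ orderkTuples k m, g fun j ↦ (f j).1) s := by
  rw [← (Equiv.sigmaFiberEquiv tupleWeight).hasSum_iff] at hg
  exact hg.sigma fun m ↦ (weightFiberEquiv k m).hasSum_iff.2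
    ((orderkTuples k m).hasSum fun f ↦ g fun j ↦ (f j).1)

theorem prod_mul_pow_succ_pow_div_factorial (lam t : ℝ) (n : Fin k → ℕ) :
    ∏ j, (lam * t ^ (j.1 + 1)) ^ n j / (n j).factorial =
      (∏ j, lam ^ n j / (n j).factorial) * t ^ tupleWeight n := by
  rw [tupleWeight, ← Finset.prod_pow_eq_pow_sum, ← Finset.prod_mul_distrib]
  refine Finset.prod_congr rfl fun j _ ↦ ?_
  rw [mul_pow, ← pow_mul, mul_div_right_comm]

end Tuples

/-- The logarithm `λ ∑_{j=1}^k (tʲ - 1)` of the probability generating function of the Poisson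
distribution of order `k`. -/
noncomputable def poissonOrderKLogPGF (k : ℕ) (lam t : ℝ) : ℝ :=
  lam * ∑ j : Fin k, (t ^ (j.1 + 1) - 1)

theorem poissonOrderKLogPGF_one (k : ℕ) (lam : ℝ) : poissonOrderKLogPGF k lam 1 = 0 := by
  simp [poissonOrderKLogPGF]

theorem contDiff_poissonOrderKLogPGF (k : ℕ) (lam : ℝ) (n : WithTop ℕ∞) :
    ContDiff ℝ n (poissonOrderKLogPGF k lam) := by
  unfold poissonOrderKLogPGF
  fun_prop

theorem iteratedDeriv_poissonOrderKLogPGF_one (k : ℕ) (lam : ℝ) (i : ℕ) :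
    iteratedDeriv (i + 1) (poissonOrderKLogPGF k lam) 1 =
      lam * ((i + 1).factorial * kappa k (i + 1)) := by
  have iteratedDeriv_summand (j : Fin k) :
      iteratedDeriv (i + 1) (fun t : ℝ ↦ t ^ (j.1 + 1) - 1) 1 =
        (i + 1).factorial * (j.1 + 1).choose (i + 1) := by
    rw [iteratedDeriv_fun_sub (by fun_prop) (by fun_prop), iteratedDeriv_pow,
      iteratedDeriv_const, Nat.descFactorial_eq_factorial_mul_choose]
    simp
  unfold poissonOrderKLogPGF
  rw [iteratedDeriv_const_mul_field, iteratedDeriv_fun_sum fun j _ ↦ by fun_prop]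
  simp only [iteratedDeriv_summand]
  rw [← Finset.mul_sum, kappa, ← sum_choose_succ_eq_choose, Nat.cast_sum]

theorem hasSum_poissonOrderK_mul_pow (k : ℕ) (lam t : ℝ) :
    HasSum (fun m ↦ poissonOrderK k lam m * t ^ m) (Real.exp (poissonOrderKLogPGF k lam t)) := by
  have exp_hasSum (x : ℝ) : HasSum (fun n : ℕ ↦ x ^ n / n.factorial) (Real.exp x) := by
    simpa only [Real.exp_eq_exp_ℝ] using NormedSpace.expSeries_div_hasSum_exp x
  have graded := (hasSum_sum_orderkTuples (hasSum_pi_prod fun j : Fin k ↦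
    exp_hasSum (lam * t ^ (j.1 + 1)))).mul_left (Real.exp (-(k * lam)))
  have exp_logPGF : Real.exp (poissonOrderKLogPGF k lam t) =
      Real.exp (-(k * lam)) * ∏ j : Fin k, Real.exp (lam * t ^ (j.1 + 1)) := by
    rw [← Real.exp_sum, ← Real.exp_add, poissonOrderKLogPGF, Finset.sum_sub_distrib,
      ← Finset.mul_sum, Fin.sum_const, nsmul_one]
    ring_nf
  rw [exp_logPGF]
  refine graded.congr_fun fun m ↦ ?_
  rw [poissonOrderK, mul_assoc, Finset.sum_mul]
  congr 1
  refine Finset.sum_congr rfl fun f hf ↦ ?_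
  rw [prod_mul_pow_succ_pow_div_factorial, mem_orderkTuples.1 hf]

/-- The `n`-th factorial moment `∑ₘ m(m-1)⋯(m-n+1) pₘ` of a mass function `p` on `ℕ`, with the
junk value `0` when the series diverges. -/
noncomputable def factorialMoment (p : ℕ → ℝ) (n : ℕ) : ℝ :=
  ∑' m : ℕ, (m.descFactorial n : ℝ) * p m

section FactorialMoments

variable (k : ℕ) (lam : ℝ) (n : ℕ)

theorem factorialMoment_poissonOrderK :
    factorialMoment (poissonOrderK k lam) n =
      iteratedDeriv n (fun t ↦ Real.exp (poissonOrderKLogPGF k lam t)) 1 :=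
  (hasSum_descFactorial_mul_of_forall_hasSum (hasSum_poissonOrderK_mul_pow k lam) n).tsum_eq

theorem hasSum_factorialMoment_poissonOrderK :
    HasSum (fun m : ℕ ↦ (m.descFactorial n : ℝ) * poissonOrderK k lam m)
      (factorialMoment (poissonOrderK k lam) n) := by
  rw [factorialMoment_poissonOrderK]
  exact hasSum_descFactorial_mul_of_forall_hasSum (hasSum_poissonOrderK_mul_pow k lam) n

theorem factorialMoment_poissonOrderK_zero : factorialMoment (poissonOrderK k lam) 0 = 1 := by
  simp [factorialMoment_poissonOrderK, poissonOrderKLogPGF_one]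

theorem factorialMoment_poissonOrderK_succ :
    factorialMoment (poissonOrderK k lam) (n + 1) =
      ∑ i ∈ Finset.range (n + 1), n.choose i * (lam * ((i + 1).factorial * kappa k (i + 1))) *
        factorialMoment (poissonOrderK k lam) (n - i) := by
  simp only [factorialMoment_poissonOrderK,
    iteratedDeriv_succ_exp (contDiff_poissonOrderKLogPGF k lam _),
    iteratedDeriv_poissonOrderKLogPGF_one]

end FactorialMoments

/-- The fifth factorial moment of the Poisson distribution of order `k` is
`M_{(5)}(k,λ) = κ₁⁵λ⁵ + 20κ₁³κ₂λ⁴ + (60κ₁κ₂² + 60κ₁²κ₃)λ³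
  + (120κ₁κ₄ + 120κ₂κ₃)λ² + 120κ₅λ`. -/
theorem poissonOrderK_fifthFactorialMoment (k : ℕ) (hk : 1 ≤ k) (lam : ℝ) (hlam : 0 < lam) :
    HasSum (fun m : ℕ => (m.descFactorial 5 : ℝ) * poissonOrderK k lam m)
      (kappa k 1 ^ 5 * lam ^ 5 + 20 * kappa k 1 ^ 3 * kappa k 2 * lam ^ 4
        + (60 * kappa k 1 * kappa k 2 ^ 2 + 60 * kappa k 1 ^ 2 * kappa k 3) * lam ^ 3
        + (120 * kappa k 1 * kappa k 4 + 120 * kappa k 2 * kappa k 3) * lam ^ 2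
        + 120 * kappa k 5 * lam) := by
  convert hasSum_factorialMoment_poissonOrderK k lam 5 using 1
  simp only [factorialMoment_poissonOrderK_succ, factorialMoment_poissonOrderK_zero,
    Finset.sum_range_succ, Finset.sum_range_zero, Nat.reduceSub, Nat.reduceAdd, Nat.choose,
    Nat.factorial]
  push_cast
  ring
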